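/- arXiv:2106.14605 — 2 statements merged into one kernel-verified Lean document; each statement's English description precedes it below -/
import Mathlib

section
/- Let s ≥ 1 and n = 6·2^s − 3. (i) Let A1 be the set of 12 monomials obtained by assigning the exponents 2^{s+2}−1, 2^s−1, 2^s−1 to three distinct variables among x_1,...,x_4 (the remaining variable having exponent 0). The Σ_4-submodule of Q_n generated by the class of x_2^{2^s−1}x_3^{2^s−1}x_4^{2^{s+2}−1} equals the span of the classes of the monomials in A1, and its subspace of Σ_4-invariants is one-dimensional, spanned by the class of the sum of all monomials in A1. (ii) Let A2 be the set of 12 monomials obtained by assigning the exponents 2^s−1, 2^{s+1}−1, 3·2^s−1 to three distinct variables such that the variable carrying 2^{s+1}−1 has smaller index than the variable carrying 3·2^s−1. The Σ_4-submodule of Q_n generated by the class of x_2^{2^s−1}x_3^{2^{s+1}−1}x_4^{3·2^s−1} equals the span of the classes of the monomials in A2, and its subspace of Σ_4-invariants is spanned by the class of the sum of all monomials in A2. (iii) Let A3 be the set of 4 monomials x_i^{2^{s+1}−1}x_j^{2^{s+1}−1}x_k^{2^{s+1}−1} with 1 ≤ i < j < k ≤ 4. The Σ_4-submodule of Q_n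 generated by the class of x_2^{2^{s+1}−1}x_3^{2^{s+1}−1}x_4^{2^{s+1}−1} equals the span of the classes of the monomials in A3, and its subspace of Σ_4-invariants is spanned by the class of the sum of all monomials in A3. -/
/-!
Common setup: the polynomial algebra `P_4 = F_2[x_1,x_2,x_3,x_4]` (variables `X 0, ..., X 3`),
the Steenrod action, hit polynomials, the cohit spaces `Q_n`, and the (induced) actions of
`GL_4(F_2)` and of the symmetric group `Σ_4` on `Q_n`.
-/

open MvPolynomial

noncomputable section

abbrev kk : Type := ZMod 2
abbrev P4 : Type := MvPolynomial (Fin 4) kk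

/-- The total Steenrod square: the algebra endomorphism of `P4` with `X i ↦ X i + (X i)^2`.
For `g` homogeneous of degree `d`, `Sq^t g` is the degree-`d+t` homogeneous component
of `sqTotal g`. -/
def sqTotal : P4 →ₐ[kk] P4 := aeval fun i => X i + X i ^ 2

/-- The homogeneous polynomials of degree `n`, i.e. `(P_4)_n`, as a submodule. -/
def homog (n : ℕ) : Submodule kk P4 := homogeneousSubmodule (Fin 4) kk n

/-- The subspace `H_n` of hit polynomials of degree `n`: it is spanned by the elements
`Sq^{n-d}(g) = (sqTotal g)_n` for `g` homogeneous of degree `d < n`, i.e. by all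
`∑_{t>0} Sq^t(f_t)` with `f_t ∈ (P_4)_{n-t}`. -/
def hitSub (n : ℕ) : Submodule kk P4 :=
  Submodule.span kk
    {p | ∃ d, d < n ∧ ∃ g ∈ homog d, p = homogeneousComponent n (sqTotal g)}

/-- The cohit space `Q_n = (P_4)_n / H_n`. -/
abbrev Qn (n : ℕ) :=
  ↥(homog n) ⧸ ((hitSub n).comap (homog n).subtype)

/-- Projection of a polynomial onto its degree-`n` part, landing in `homog n`. -/
def toHomog (n : ℕ) : P4 →ₗ[kk] homog n :=
  (homogeneousComponent n).codRestrict (homog n) fun f => homogeneousComponent_mem n f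

/-- The class in `Q_n` of (the degree-`n` component of) a polynomial.  For `f`
homogeneous of degree `n` this is the class `[f]` of `f`. -/
def Qmk (n : ℕ) : P4 →ₗ[kk] Qn n :=
  ((hitSub n).comap (homog n).subtype).mkQ.comp (toHomog n)

/-- Substitution action of a matrix `M`: the algebra endomorphism `X i ↦ ∑ j M i j • X j`. -/
def substM (M : Matrix (Fin 4) (Fin 4) kk) : P4 →ₐ[kk] P4 :=
  aeval fun i => ∑ j, M i j • X j

/-- The set of invertible `4 × 4` matrices over `F_2`, i.e. `GL_4(F_2)`. -/
def glSet : Set (Matrix (Fin 4) (Fin 4) kk) := {M | IsUnit M}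

/-- The set of permutation matrices, i.e. `Σ_4 ⊆ GL_4(F_2)`. -/
def permSet : Set (Matrix (Fin 4) (Fin 4) kk) :=
  {M | ∃ σ : Equiv.Perm (Fin 4), M = σ.toPEquiv.toMatrix}

/-- Homogeneous polynomials of degree `n` whose class in `Q_n` is invariant under every
element of `G` (the action on classes being induced by `substM`): for every `M ∈ G`,
`M·f - f` is hit. -/
def invPre (n : ℕ) (G : Set (Matrix (Fin 4) (Fin 4) kk)) : Submodule kk P4 :=
  homog n ⊓ ⨅ M ∈ G, (hitSub n).comap ((substM M).toLinearMap - LinearMap.id)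

/-- The subspace `(Q_n)^G` of `G`-invariant classes in `Q_n`. -/
def QInv (n : ℕ) (G : Set (Matrix (Fin 4) (Fin 4) kk)) : Submodule kk (Qn n) :=
  (invPre n G).map (Qmk n)

/-- The `Σ_4`-submodule of `Q_n` generated by the classes of the polynomials in `S`:
the span of the classes of all the permuted polynomials `σ · f`, `σ ∈ Σ_4`, `f ∈ S`. -/
def permSpan (n : ℕ) (S : Set P4) : Submodule kk (Qn n) :=
  Submodule.span kk
    {c | ∃ σ : Equiv.Perm (Fin 4), ∃ f ∈ S, c = Qmk n (rename (⇑σ) f)}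

/-- The set `A1` of the 12 monomials with exponents `2^{s+2}-1, 2^s-1, 2^s-1` on three
distinct variables. -/
def A1set (s : ℕ) : Set P4 :=
  {f | ∃ i j l : Fin 4, i ≠ j ∧ i ≠ l ∧ j ≠ l ∧
    f = X i ^ (2 ^ (s + 2) - 1) * X j ^ (2 ^ s - 1) * X l ^ (2 ^ s - 1)}

/-- The sum of the 12 monomials of `A1`. -/
def A1sum (s : ℕ) : P4 :=
  ∑ i : Fin 4, ∑ j : Fin 4, ∑ l : Fin 4,
    if i ≠ j ∧ i ≠ l ∧ j ≠ l ∧ j < l then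
      X i ^ (2 ^ (s + 2) - 1) * X j ^ (2 ^ s - 1) * X l ^ (2 ^ s - 1)
    else 0

/-- The set `A2` of the 12 monomials with exponents `2^s-1, 2^{s+1}-1, 3·2^s-1` on three
distinct variables, the variable carrying `2^{s+1}-1` having smaller index than the variable
carrying `3·2^s-1`. -/
def A2set (s : ℕ) : Set P4 :=
  {f | ∃ i j l : Fin 4, i ≠ j ∧ i ≠ l ∧ j ≠ l ∧ j < l ∧
    f = X i ^ (2 ^ s - 1) * X j ^ (2 ^ (s + 1) - 1) * X l ^ (3 * 2 ^ s - 1)}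

/-- The sum of the 12 monomials of `A2`. -/
def A2sum (s : ℕ) : P4 :=
  ∑ i : Fin 4, ∑ j : Fin 4, ∑ l : Fin 4,
    if i ≠ j ∧ i ≠ l ∧ j ≠ l ∧ j < l then
      X i ^ (2 ^ s - 1) * X j ^ (2 ^ (s + 1) - 1) * X l ^ (3 * 2 ^ s - 1)
    else 0

/-- The set `A3` of the 4 monomials `x_i^{2^{s+1}-1} x_j^{2^{s+1}-1} x_k^{2^{s+1}-1}`,
`i < j < k`. -/
def A3set (s : ℕ) : Set P4 :=
  {f | ∃ i j l : Fin 4, i < j ∧ j < l ∧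
    f = X i ^ (2 ^ (s + 1) - 1) * X j ^ (2 ^ (s + 1) - 1) * X l ^ (2 ^ (s + 1) - 1)}

/-- The sum of the 4 monomials of `A3`. -/
def A3sum (s : ℕ) : P4 :=
  ∑ i : Fin 4, ∑ j : Fin 4, ∑ l : Fin 4,
    if i < j ∧ j < l then
      X i ^ (2 ^ (s + 1) - 1) * X j ^ (2 ^ (s + 1) - 1) * X l ^ (2 ^ (s + 1) - 1)
    else 0

/-!
A linear functional on `P_4` which is invariant under the total square `Sq` vanishes on hit
polynomials. The coefficient of a spike (a monomial with all exponents of the form `2^k - 1`) is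
such a functional, which makes the classes of the monomials of `A1` and of `A3` linearly
independent; for `A2` one uses the sum of two coefficients, of monomials exchanged by a
transposition. For `A1` and `A3` the symmetric group permutes the given monomials. For `A2` this
holds only modulo hit polynomials, by a relation that follows from `Sq(x_j x_l)` in degree `3` and
propagates from `s` to `s + 1` along Kameko's squaring map `f ↦ x_i x_j x_l f^2`. It remains to note
that the invariants in the span of a linearly independent family which a group permutes
transitively are spanned by the sum of the family.
-/

section PermutedFamilies

variable {k G V ι : Type*} [CommRing k] [Group G] [AddCommGroup V] [Module k V]
  {ρ : Representation k G V} {c : ι → V}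

theorem span_orbit_eq_span_range (hperm : ∀ g i, ρ g (c i) ∈ Set.range c) (i₀ : ι)
    (htrans : ∀ j, ∃ g, ρ g (c i₀) = c j) :
    Submodule.span k (Set.range fun g => ρ g (c i₀)) = Submodule.span k (Set.range c) := by
  congr 1
  refine Set.Subset.antisymm ?_ ?_
  · rintro _ ⟨g, rfl⟩
    exact hperm g i₀
  · rintro _ ⟨j, rfl⟩
    exact htrans j

variable [Nontrivial k]

lemma exists_perm_of_forall_mem_range [Finite ι] (hc : LinearIndependent k c) {g : G}
    (hg : ∀ i, ρ g (c i) ∈ Set.range c) : ∃ e : Equiv.Perm ι, ∀ i, ρ g (c i) = c (e i) := by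
  choose a ha using hg
  have a_inj : Function.Injective a := fun i j hij =>
    hc.injective ((ρ.apply_bijective g).injective (by rw [← ha, ← ha, hij]))
  exact ⟨Equiv.ofBijective a (Finite.injective_iff_bijective.1 a_inj), fun i => (ha i).symm⟩

theorem span_range_inf_invariants_eq_span_sum [Fintype ι] (hc : LinearIndependent k c)
    (hperm : ∀ g i, ρ g (c i) ∈ Set.range c) (i₀ : ι) (htrans : ∀ j, ∃ g, ρ g (c i₀) = c j) :
    Submodule.span k (Set.range c) ⊓ ρ.invariants = Submodule.span k {∑ i, c i} := by
  have act g := exists_perm_of_forall_mem_range hc (hperm g)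
  refine le_antisymm ?_ ((Submodule.span_singleton_le_iff_mem _ _).2 ⟨?_, fun g => ?_⟩)
  · rintro x ⟨hx, hinv⟩
    obtain ⟨a, rfl⟩ := (Submodule.mem_span_range_iff_exists_fun k).1 hx
    have a_const j : a j = a i₀ := by
      obtain ⟨g, hgj⟩ := htrans j
      obtain ⟨e, he⟩ := act g
      have hj : e i₀ = j := hc.injective (by rw [← he, hgj])
      have key : ∑ i, a i • c (e i) = ∑ i, a (e i) • c (e i) := by
        rw [Equiv.sum_comp e (fun i => a i • c i)]
        simpa [he] using hinv g
      rw [← hj]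
      exact (Fintype.linearIndependent_iffₛ.1 (hc.comp e e.injective) a (a ∘ e) key i₀).symm
    refine Submodule.mem_span_singleton.2 ⟨a i₀, ?_⟩
    simp only [a_const, Finset.smul_sum]
  · exact Submodule.sum_mem _ fun i _ => Submodule.subset_span ⟨i, rfl⟩
  · obtain ⟨e, he⟩ := act g
    simpa only [map_sum, he] using Equiv.sum_comp e c

end PermutedFamilies

section Polynomials

variable {σ R : Type*} [CommSemiring R]

lemma linearMap_apply_eq_of_monomial {M : Type*} [AddCommMonoid M] [Module R M]
    {L L' : MvPolynomial σ R →ₗ[R] M} (h : ∀ m, L (monomial m 1) = L' (monomial m 1))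
    (f : MvPolynomial σ R) : L f = L' f :=
  LinearMap.congr_fun (linearMap_ext fun m => LinearMap.ext_ring (h m)) f

lemma isHomogeneous_monomial_one (m : σ →₀ ℕ) :
    (monomial m (1 : R)).IsHomogeneous m.degree :=
  isHomogeneous_monomial 1 rfl

lemma eq_of_le_of_degree_le {m e : σ →₀ ℕ} (h : m ≤ e) (hd : e.degree ≤ m.degree) : m = e := by
  obtain ⟨c, rfl⟩ := exists_add_of_le h
  have hc : c = 0 := by
    rw [← Finsupp.degree_eq_zero_iff]
    simpa using hd
  simp [hc]

lemma prod_ite_eq_apply [Fintype σ] [DecidableEq (σ →₀ ℕ)] (m e : σ →₀ ℕ) :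
    ∏ i, (if m i = e i then (1 : R) else 0) = if m = e then 1 else 0 := by
  simp [Finset.prod_ite_zero, DFunLike.ext_iff]

lemma coeff_prod_aeval_X [Fintype σ] (p : σ → Polynomial R) (e : σ →₀ ℕ) :
    coeff e (∏ i, Polynomial.aeval (X i : MvPolynomial σ R) (p i)) = ∏ i, (p i).coeff (e i) := by
  let F : MultilinearMap R (fun _ : σ => Polynomial R) R :=
    (lcoeff R e).compMultilinearMap ((MultilinearMap.mkPiAlgebra R σ _).compLinearMap
      fun i => (Polynomial.aeval (X i : MvPolynomial σ R)).toLinearMap)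
  let F' : MultilinearMap R (fun _ : σ => Polynomial R) R :=
    (MultilinearMap.mkPiAlgebra R σ R).compLinearMap fun i => Polynomial.lcoeff R (e i)
  have hF : F = F' := by
    classical
    refine Module.Basis.ext_multilinear (fun _ => Polynomial.basisMonomials R) fun k => ?_
    have hmon : ∏ i, (X i : MvPolynomial σ R) ^ k i =
        monomial (Finsupp.equivFunOnFinite.symm k) 1 := by
      simp [monomial_eq, Finsupp.prod_fintype]
    simp only [F, F', LinearMap.compMultilinearMap_apply, MultilinearMap.compLinearMap_apply,
      MultilinearMap.mkPiAlgebra_apply, Polynomial.coe_basisMonomials, AlgHom.toLinearMap_apply,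
      Polynomial.aeval_monomial, map_one, one_mul, hmon, lcoeff_apply, coeff_monomial,
      Polynomial.lcoeff_apply, Polynomial.coeff_monomial]
    rw [← prod_ite_eq_apply]
    rfl
  exact congrArg (fun H : MultilinearMap R (fun _ : σ => Polynomial R) R => H p) hF

end Polynomials

/-- The coefficient of `x ^ e` in the total square `Sq(x ^ k) = (x + x ^ 2) ^ k` of a power of one
variable. -/
def sqCoeff (k e : ℕ) : kk := ((Polynomial.X + Polynomial.X ^ 2 : Polynomial kk) ^ k).coeff e

lemma coeff_sqTotal_monomial (m e : Fin 4 →₀ ℕ) :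
    coeff e (sqTotal (monomial m 1)) = ∏ i, sqCoeff (m i) (e i) := by
  have hprod : sqTotal (monomial m 1) = ∏ i, Polynomial.aeval (X i : P4)
      ((Polynomial.X + Polynomial.X ^ 2 : Polynomial kk) ^ m i) := by
    rw [sqTotal, aeval_monomial, Finsupp.prod_fintype _ _ (by simp)]
    simp
  rw [hprod, coeff_prod_aeval_X]
  rfl

lemma sqCoeff_eq_choose (k e : ℕ) :
    sqCoeff k e = ((if k ≤ e then k.choose (e - k) else 0 : ℕ) : kk) := by
  have factor : (Polynomial.X + Polynomial.X ^ 2 : Polynomial kk) =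
      Polynomial.X * (1 + Polynomial.X) := by
    ring
  rw [sqCoeff, factor, mul_pow, Polynomial.coeff_X_pow_mul', Polynomial.coeff_one_add_X_pow]
  split_ifs <;> simp

lemma sqCoeff_eq_zero_of_lt {k e : ℕ} (h : e < k) : sqCoeff k e = 0 := by
  simp [sqCoeff_eq_choose, h.not_ge]

lemma sqCoeff_eq_zero_of_two_mul_lt {k e : ℕ} (h : 2 * k < e) : sqCoeff k e = 0 := by
  rw [sqCoeff_eq_choose, Nat.choose_eq_zero_of_lt (by omega), ite_self, Nat.cast_zero]

lemma sqCoeff_self (k : ℕ) : sqCoeff k k = 1 := by simp [sqCoeff_eq_choose]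

lemma sqCoeff_two_mul_self (k : ℕ) : sqCoeff k (2 * k) = 1 := by
  rw [sqCoeff_eq_choose, if_pos (by omega), show 2 * k - k = k by omega, Nat.choose_self,
    Nat.cast_one]

lemma le_and_le_two_nsmul_of_prod_sqCoeff_ne_zero {m e : Fin 4 →₀ ℕ}
    (h : ∏ i, sqCoeff (m i) (e i) ≠ 0) : m ≤ e ∧ e ≤ 2 • m := by
  have hi i : sqCoeff (m i) (e i) ≠ 0 := Finset.prod_ne_zero_iff.1 h i (Finset.mem_univ i)
  exact ⟨fun i => not_lt.1 fun hlt => hi i (sqCoeff_eq_zero_of_lt hlt),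
    fun i => not_lt.1 fun hlt => hi i (sqCoeff_eq_zero_of_two_mul_lt hlt)⟩

lemma homogeneousComponent_sqTotal_monomial_of_le {n : ℕ} {m : Fin 4 →₀ ℕ} (h : n ≤ m.degree) :
    homogeneousComponent n (sqTotal (monomial m 1)) = homogeneousComponent n (monomial m 1) := by
  ext e
  rw [coeff_homogeneousComponent, coeff_homogeneousComponent, coeff_sqTotal_monomial,
    coeff_monomial]
  split_ifs with he hme
  · simp [hme, sqCoeff_self]
  · by_contra hne
    exact hme (eq_of_le_of_degree_le (le_and_le_two_nsmul_of_prod_sqCoeff_ne_zero hne).1 (he ▸ h))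
  · rfl

lemma homogeneousComponent_two_mul_degree_sqTotal_monomial (m : Fin 4 →₀ ℕ) :
    homogeneousComponent (2 * m.degree) (sqTotal (monomial m 1)) = monomial m 1 ^ 2 := by
  ext e
  rw [coeff_homogeneousComponent, coeff_sqTotal_monomial, monomial_pow, one_pow, coeff_monomial]
  split_ifs with he hme hme
  · simp [← hme, sqCoeff_two_mul_self]
  · by_contra hne
    exact hme (eq_of_le_of_degree_le (le_and_le_two_nsmul_of_prod_sqCoeff_ne_zero hne).2
      (by simp [he])).symm
  · simp [← hme] at he
  · rfl

/-- A linear map on `P4` factoring through `Q_n`: it kills `(P_4)_d` for `d ≠ n` and takes the same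
value on `f` and on its total square. `Qmk n` is the universal such map, and the `kk`-valued ones
form the dual of `Q_n`. -/
structure IsCohitMap (n : ℕ) {M : Type*} [AddCommGroup M] [Module kk M] (L : P4 →ₗ[kk] M) :
    Prop where
  eq_zero_of_isHomogeneous {d : ℕ} {f : P4} (hd : d ≠ n) (hf : f.IsHomogeneous d) : L f = 0
  apply_sqTotal (f : P4) : L (sqTotal f) = L f

lemma Qmk_eq_zero_iff {n : ℕ} {f : P4} : Qmk n f = 0 ↔ homogeneousComponent n f ∈ hitSub n := by
  rw [Qmk, LinearMap.comp_apply, Submodule.mkQ_apply, Submodule.Quotient.mk_eq_zero]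
  rfl

lemma Qmk_surjective (n : ℕ) : Function.Surjective (Qmk n) := by
  refine (Submodule.mkQ_surjective _).comp fun f => ⟨f, Subtype.ext ?_⟩
  exact homogeneousComponent_eq_self f.2

lemma Qmk_eq_zero_of_isHomogeneous {n d : ℕ} {f : P4} (hd : d ≠ n) (hf : f.IsHomogeneous d) :
    Qmk n f = 0 := by
  rw [Qmk_eq_zero_iff, homogeneousComponent_of_mem hf, if_neg hd.symm]
  exact zero_mem _

lemma Qmk_sqTotal (n : ℕ) (f : P4) : Qmk n (sqTotal f) = Qmk n f := by
  refine linearMap_apply_eq_of_monomial (L := Qmk n ∘ₗ sqTotal.toLinearMap) (fun m => ?_) f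
  change Qmk n (sqTotal (monomial m 1)) = Qmk n (monomial m 1)
  have hm := isHomogeneous_monomial_one (R := kk) m
  rcases lt_or_ge m.degree n with h | h
  · rw [Qmk_eq_zero_of_isHomogeneous h.ne hm, Qmk_eq_zero_iff]
    exact Submodule.subset_span ⟨_, h, _, hm, rfl⟩
  · rw [← sub_eq_zero, ← map_sub, Qmk_eq_zero_iff, map_sub,
      homogeneousComponent_sqTotal_monomial_of_le h, sub_self]
    exact zero_mem _

lemma isCohitMap_Qmk (n : ℕ) : IsCohitMap n (Qmk n) :=
  ⟨Qmk_eq_zero_of_isHomogeneous, Qmk_sqTotal n⟩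

namespace IsCohitMap

variable {n : ℕ} {M : Type*} [AddCommGroup M] [Module kk M] {L : P4 →ₗ[kk] M}

lemma apply_homogeneousComponent (hL : IsCohitMap n L) (f : P4) :
    L (homogeneousComponent n f) = L f := by
  refine linearMap_apply_eq_of_monomial (L := L ∘ₗ homogeneousComponent n) (fun m => ?_) f
  have hm := isHomogeneous_monomial_one (R := kk) m
  rw [LinearMap.comp_apply, homogeneousComponent_of_mem hm]
  split_ifs with h
  · rfl
  · rw [map_zero, hL.eq_zero_of_isHomogeneous (Ne.symm h) hm]

lemma hitSub_le_ker (hL : IsCohitMap n L) : hitSub n ≤ LinearMap.ker L := by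
  refine Submodule.span_le.2 ?_
  rintro _ ⟨d, hd, f, hf, rfl⟩
  change L _ = 0
  rw [hL.apply_homogeneousComponent, hL.apply_sqTotal, hL.eq_zero_of_isHomogeneous hd.ne hf]

/-- The map induced on `Q_n` by a cohit map. -/
def lift (hL : IsCohitMap n L) : Qn n →ₗ[kk] M :=
  Submodule.liftQ _ (L ∘ₗ (homog n).subtype) fun _ hf => hL.hitSub_le_ker hf

lemma lift_Qmk (hL : IsCohitMap n L) (f : P4) : hL.lift (Qmk n f) = L f :=
  hL.apply_homogeneousComponent f

lemma apply_eq_of_Qmk_eq (hL : IsCohitMap n L) {f g : P4} (h : Qmk n f = Qmk n g) : L f = L g := by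
  rw [← hL.lift_Qmk, h, hL.lift_Qmk]

end IsCohitMap

lemma linearIndependent_Qmk_of_dual {n : ℕ} {ι : Type*} {v : ι → P4} {φ : ι → P4 →ₗ[kk] kk}
    (hφ : ∀ i, IsCohitMap n (φ i)) (h₀ : ∀ i j, i ≠ j → φ i (v j) = 0) (h₁ : ∀ i, φ i (v i) = 1) :
    LinearIndependent kk fun i => Qmk n (v i) :=
  .of_pairwise_dual_eq_zero_one _ (fun i => (hφ i).lift)
    (fun i j hij => ((hφ i).lift_Qmk _).trans (h₀ i j hij))
    fun i => ((hφ i).lift_Qmk _).trans (h₁ i)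

section SymmetricGroup

lemma substM_toMatrix (σ : Equiv.Perm (Fin 4)) :
    substM σ.toPEquiv.toMatrix = rename (R := kk) σ := by
  ext i : 1
  simp [substM, PEquiv.toMatrix_apply, Equiv.toPEquiv_apply]

lemma sqTotal_rename (σ : Equiv.Perm (Fin 4)) (f : P4) :
    sqTotal (rename σ f) = rename σ (sqTotal f) := by
  have hcomp : sqTotal.comp (rename σ) = (rename (R := kk) σ).comp sqTotal := by
    ext i : 1
    simp [sqTotal]
  exact DFunLike.congr_fun hcomp f

lemma isCohitMap_Qmk_comp_rename (n : ℕ) (σ : Equiv.Perm (Fin 4)) :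
    IsCohitMap n (Qmk n ∘ₗ (rename (R := kk) σ).toLinearMap) where
  eq_zero_of_isHomogeneous hd hf := Qmk_eq_zero_of_isHomogeneous hd hf.rename_isHomogeneous
  apply_sqTotal f := by
    change Qmk n (rename σ (sqTotal f)) = Qmk n (rename σ f)
    rw [← sqTotal_rename, Qmk_sqTotal]

/-- The representation of `Σ_4` on `Q_n` induced by permuting the variables. -/
def permRep (n : ℕ) : Representation kk (Equiv.Perm (Fin 4)) (Qn n) where
  toFun σ := (isCohitMap_Qmk_comp_rename n σ).lift
  map_one' := by
    refine LinearMap.ext fun x => ?_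
    obtain ⟨f, rfl⟩ := Qmk_surjective n x
    simp [IsCohitMap.lift_Qmk]
  map_mul' σ τ := by
    refine LinearMap.ext fun x => ?_
    obtain ⟨f, rfl⟩ := Qmk_surjective n x
    simp [IsCohitMap.lift_Qmk, rename_rename]

lemma permRep_Qmk (n : ℕ) (σ : Equiv.Perm (Fin 4)) (f : P4) :
    permRep n σ (Qmk n f) = Qmk n (rename σ f) :=
  (isCohitMap_Qmk_comp_rename n σ).lift_Qmk f

lemma permSpan_singleton (n : ℕ) (f : P4) :
    permSpan n {f} = Submodule.span kk (Set.range fun σ => permRep n σ (Qmk n f)) := by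
  simp only [permSpan, Set.mem_singleton_iff, exists_eq_left, permRep_Qmk]
  congr 1
  ext c
  simp [eq_comm]

lemma substM_sub_mem_hitSub_iff {n : ℕ} {f : P4} (hf : f.IsHomogeneous n)
    (σ : Equiv.Perm (Fin 4)) :
    substM σ.toPEquiv.toMatrix f - f ∈ hitSub n ↔ permRep n σ (Qmk n f) = Qmk n f := by
  rw [permRep_Qmk, substM_toMatrix, ← sub_eq_zero, ← map_sub, Qmk_eq_zero_iff,
    homogeneousComponent_eq_self (hf.rename_isHomogeneous.sub hf)]

lemma mem_invPre_permSet_iff {n : ℕ} {f : P4} :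
    f ∈ invPre n permSet ↔ f.IsHomogeneous n ∧ Qmk n f ∈ (permRep n).invariants := by
  rw [invPre, Submodule.mem_inf]
  refine and_congr_right fun hf => ?_
  simp only [permSet, Set.mem_ofPred_eq, Submodule.mem_iInf, Submodule.mem_comap,
    LinearMap.sub_apply, AlgHom.toLinearMap_apply, LinearMap.id_apply, forall_exists_index,
    forall_eq_apply_imp_iff, substM_sub_mem_hitSub_iff hf, Representation.mem_invariants]

lemma QInv_permSet (n : ℕ) : QInv n permSet = (permRep n).invariants := by
  ext x
  refine ⟨?_, fun hx => ?_⟩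
  · rintro ⟨f, hf, rfl⟩
    exact (mem_invPre_permSet_iff.1 hf).2
  · obtain ⟨f, rfl⟩ := Qmk_surjective n x
    have hQ := (isCohitMap_Qmk n).apply_homogeneousComponent f
    exact ⟨homogeneousComponent n f, mem_invPre_permSet_iff.2
      ⟨homogeneousComponent_isHomogeneous n f, hQ ▸ hx⟩, hQ⟩

variable {n : ℕ} {ι : Type*} {v : ι → P4}

theorem permSpan_singleton_eq_span_range
    (hperm : ∀ σ : Equiv.Perm (Fin 4), ∀ i, ∃ j, Qmk n (v j) = Qmk n (rename σ (v i))) (i₀ : ι)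
    (htrans : ∀ j, ∃ σ : Equiv.Perm (Fin 4), Qmk n (rename σ (v i₀)) = Qmk n (v j)) :
    permSpan n {v i₀} = Submodule.span kk (Qmk n '' Set.range v) := by
  simp only [← permRep_Qmk] at hperm htrans
  rw [permSpan_singleton, ← Set.range_comp, span_orbit_eq_span_range hperm i₀ htrans]
  rfl

theorem permSpan_singleton_inf_QInv [Fintype ι] (hv : LinearIndependent kk fun i => Qmk n (v i))
    (hperm : ∀ σ : Equiv.Perm (Fin 4), ∀ i, ∃ j, Qmk n (v j) = Qmk n (rename σ (v i))) (i₀ : ι)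
    (htrans : ∀ j, ∃ σ : Equiv.Perm (Fin 4), Qmk n (rename σ (v i₀)) = Qmk n (v j)) :
    permSpan n {v i₀} ⊓ QInv n permSet = Submodule.span kk {Qmk n (∑ i, v i)} := by
  simp only [← permRep_Qmk] at hperm htrans
  rw [permSpan_singleton, span_orbit_eq_span_range (c := fun i => Qmk n (v i)) hperm i₀ htrans,
    QInv_permSet, span_range_inf_invariants_eq_span_sum hv hperm i₀ htrans, map_sum]

end SymmetricGroup

section Squaring

lemma sqTotal_X (i : Fin 4) : sqTotal (X i) = X i + X i ^ 2 := aeval_X _ i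

/-- The class in `Q_n` of `p * f ^ 2`, as a linear function of `f`. Squaring is written as
`expand 2`, which is linear over `F_2` by construction. -/
def mulSqClass (n : ℕ) (p : P4) : P4 →ₗ[kk] Qn n :=
  Qmk n ∘ₗ LinearMap.mulLeft kk p ∘ₗ (expand 2).toLinearMap

lemma mulSqClass_apply (n : ℕ) (p f : P4) : mulSqClass n p f = Qmk n (p * f ^ 2) := by
  simp [mulSqClass, expand_zmod]

lemma mulSqClass_eq_zero_of_isHomogeneous {n a d : ℕ} {p f : P4} (hp : p.IsHomogeneous a)
    (hf : f.IsHomogeneous d) (h : a + 2 * d ≠ n) : mulSqClass n p f = 0 := by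
  rw [mulSqClass_apply]
  exact Qmk_eq_zero_of_isHomogeneous (by omega) (hp.mul (hf.pow 2))

lemma Qmk_mul_sq_eq_zero_of_forall_ne {n a : ℕ} {p : P4} (hp : p.IsHomogeneous a)
    (h : ∀ d, a + 2 * d ≠ n) (f : P4) : Qmk n (p * f ^ 2) = 0 := by
  rw [← mulSqClass_apply]
  exact linearMap_apply_eq_of_monomial (L' := 0) (fun m =>
    mulSqClass_eq_zero_of_isHomogeneous hp (isHomogeneous_monomial_one m) (h _)) f

lemma Qmk_mul_eq_zero_of_lt {n a : ℕ} {p : P4} (hp : p.IsHomogeneous a) (h : n < a) (f : P4) :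
    Qmk n (p * f) = 0 :=
  linearMap_apply_eq_of_monomial (L := Qmk n ∘ₗ LinearMap.mulLeft kk p) (L' := 0) (fun m =>
    Qmk_eq_zero_of_isHomogeneous (by omega) (hp.mul (isHomogeneous_monomial_one m))) f

lemma Qmk_mul_homogeneousComponent {a : ℕ} {p : P4} (hp : p.IsHomogeneous a) (b : ℕ) (f : P4) :
    Qmk (a + b) (p * homogeneousComponent b f) = Qmk (a + b) (p * f) := by
  refine linearMap_apply_eq_of_monomial
    (L := Qmk (a + b) ∘ₗ LinearMap.mulLeft kk p ∘ₗ homogeneousComponent b)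
    (L' := Qmk (a + b) ∘ₗ LinearMap.mulLeft kk p) (fun m => ?_) f
  have hm := isHomogeneous_monomial_one (R := kk) m
  simp only [LinearMap.comp_apply, LinearMap.mulLeft_apply, homogeneousComponent_of_mem hm]
  split_ifs with h
  · rfl
  · rw [mul_zero, map_zero, Qmk_eq_zero_of_isHomogeneous (by omega) (hp.mul hm)]

lemma sqTotal_sum_X_pow_two_pow (z : Fin 4) (K : ℕ) :
    sqTotal (∑ k ∈ Finset.range K, X z ^ 2 ^ k) = X z + X z ^ 2 ^ K := by
  simp only [map_sum, map_pow, sqTotal_X, add_pow_char_pow, ← pow_mul, ← pow_succ']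
  induction K with
  | zero => simp [CharTwo.add_self_eq_zero]
  | succ K ih =>
    rw [Finset.sum_range_succ, ih, add_assoc, CharTwo.add_cancel_left]

-- Multiplying `x ^ m` by `∑ z ^ 2 ^ k`, whose total square is `z` plus a term of large degree,
-- plays the role of the antipode formula `z * Sq^e u ≡ χ(Sq^e) z * u` modulo hit polynomials.
lemma Qmk_X_mul_monomial_sq_eq_zero (z : Fin 4) {m : Fin 4 →₀ ℕ}
    (h : ∀ k, 2 ^ k ≠ m.degree + 1) :
    Qmk (1 + 2 * m.degree) (X z * monomial m 1 ^ 2) = 0 := by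
  set N := 1 + 2 * m.degree
  have hm := isHomogeneous_monomial_one (R := kk) m
  have hsum : Qmk N ((∑ k ∈ Finset.range N, X z ^ 2 ^ k) * monomial m 1) = 0 := by
    rw [Finset.sum_mul, map_sum]
    refine Finset.sum_eq_zero fun k _ => ?_
    exact Qmk_eq_zero_of_isHomogeneous (by have := h k; omega) ((isHomogeneous_X_pow z _).mul hm)
  calc Qmk N (X z * monomial m 1 ^ 2)
      = Qmk N (X z * sqTotal (monomial m 1)) := by
        rw [← homogeneousComponent_two_mul_degree_sqTotal_monomial,
          Qmk_mul_homogeneousComponent (isHomogeneous_X kk z)]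
    _ = Qmk N (X z * sqTotal (monomial m 1) + X z ^ 2 ^ N * sqTotal (monomial m 1)) := by
        rw [map_add, Qmk_mul_eq_zero_of_lt (isHomogeneous_X_pow z _) Nat.lt_two_pow_self, add_zero]
    _ = Qmk N ((∑ k ∈ Finset.range N, X z ^ 2 ^ k) * monomial m 1) := by
        rw [← add_mul, ← sqTotal_sum_X_pow_two_pow, ← map_mul, Qmk_sqTotal]
    _ = 0 := hsum

lemma Qmk_X_mul_sq_eq_zero {e : ℕ} (h : ∀ k, 2 ^ k ≠ e + 1) (z : Fin 4) (f : P4) :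
    Qmk (1 + 2 * e) (X z * f ^ 2) = 0 := by
  rw [← mulSqClass_apply]
  refine linearMap_apply_eq_of_monomial (L' := 0) (fun m => ?_) f
  by_cases hd : m.degree = e
  · subst hd
    exact (mulSqClass_apply _ _ _).trans (Qmk_X_mul_monomial_sq_eq_zero z h)
  · exact mulSqClass_eq_zero_of_isHomogeneous (isHomogeneous_X kk z)
      (isHomogeneous_monomial_one m) (by omega)

-- Kameko's squaring map `f ↦ x * y * z * f ^ 2`, from the cohits of degree `n` to those of degree
-- `2 * n + 3`.
theorem isCohitMap_mulSqClass_X_mul_X_mul_X {n : ℕ} (h : ∀ k, 2 ^ k ≠ n + 2) (x y z : Fin 4) :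
    IsCohitMap n (mulSqClass (2 * n + 3) (X x * X y * X z)) where
  eq_zero_of_isHomogeneous hd hf :=
    mulSqClass_eq_zero_of_isHomogeneous
      (((isHomogeneous_X kk x).mul (isHomogeneous_X kk y)).mul (isHomogeneous_X kk z)) hf (by omega)
  apply_sqTotal f := by
    have hX (i) : (X i : P4).IsHomogeneous 1 := isHomogeneous_X kk i
    have even_term (a : ℕ) {p : P4} (hp : p.IsHomogeneous (2 * a)) (g : P4) :
        Qmk (2 * n + 3) (p * g ^ 2) = 0 :=
      Qmk_mul_sq_eq_zero_of_forall_ne hp (by omega) g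
    have linear_term (i : Fin 4) (g : P4) : Qmk (2 * n + 3) (X i * g ^ 2) = 0 := by
      rw [show 2 * n + 3 = 1 + 2 * (n + 1) by ring]
      exact Qmk_X_mul_sq_eq_zero h i g
    set G := sqTotal f with hG
    have expansion : sqTotal (X x * X y * X z * f ^ 2) = X x * X y * X z * G ^ 2
        + (X x ^ 2 * X y * X z) * G ^ 2 + (X x * X y ^ 2 * X z) * G ^ 2
        + (X x * X y * X z ^ 2) * G ^ 2
        + X x * (X y * X z * G) ^ 2 + X y * (X x * X z * G) ^ 2 + X z * (X x * X y * G) ^ 2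
        + (X x ^ 2 * X y ^ 2 * X z ^ 2) * G ^ 2 := by
      simp only [map_mul, map_pow, sqTotal_X, ← hG]
      ring
    rw [mulSqClass_apply, mulSqClass_apply, ← Qmk_sqTotal _ (X x * X y * X z * f ^ 2), expansion]
    simp only [map_add, linear_term,
      even_term 2 ((((hX x).pow 2).mul (hX y)).mul (hX z)),
      even_term 2 (((hX x).mul ((hX y).pow 2)).mul (hX z)),
      even_term 2 (((hX x).mul (hX y)).mul ((hX z).pow 2)),
      even_term 3 ((((hX x).pow 2).mul ((hX y).pow 2)).mul ((hX z).pow 2)), add_zero]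

lemma Qmk_X_mul_X_sq_comm (j l : Fin 4) : Qmk 3 (X j * X l ^ 2) = Qmk 3 (X l * X j ^ 2) := by
  have hX (i) : (X i : P4).IsHomogeneous 1 := isHomogeneous_X kk i
  have expansion : sqTotal (X j * X l) =
      X j * X l + (X j * X l ^ 2 + X l * X j ^ 2) + X j ^ 2 * X l ^ 2 := by
    simp only [map_mul, sqTotal_X]
    ring
  have key := Qmk_sqTotal 3 (X j * X l)
  rw [expansion, map_add, map_add,
    Qmk_eq_zero_of_isHomogeneous (by norm_num) ((hX j).mul (hX l)),
    Qmk_eq_zero_of_isHomogeneous (by norm_num) (((hX j).pow 2).mul ((hX l).pow 2)), zero_add,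
    add_zero, map_add, ← ZModModule.sub_eq_add] at key
  exact sub_eq_zero.1 key

theorem Qmk_A2_swap (i j l : Fin 4) (s : ℕ) :
    Qmk (6 * 2 ^ s - 3) (X i ^ (2 ^ s - 1) * X j ^ (2 ^ (s + 1) - 1) * X l ^ (3 * 2 ^ s - 1)) =
      Qmk (6 * 2 ^ s - 3)
        (X i ^ (2 ^ s - 1) * X l ^ (2 ^ (s + 1) - 1) * X j ^ (3 * 2 ^ s - 1)) := by
  induction s with
  | zero => simpa using Qmk_X_mul_X_sq_comm j l
  | succ s ih =>
    have hpos := Nat.one_le_two_pow (n := s)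
    have hn : 6 * 2 ^ (s + 1) - 3 = 2 * (6 * 2 ^ s - 3) + 3 := by omega
    have ha : 2 ^ (s + 1) - 1 = 2 * (2 ^ s - 1) + 1 := by omega
    have hb : 2 ^ (s + 1 + 1) - 1 = 2 * (2 ^ (s + 1) - 1) + 1 := by omega
    have hc : 3 * 2 ^ (s + 1) - 1 = 2 * (3 * 2 ^ s - 1) + 1 := by omega
    have not_pow : ∀ k, 2 ^ k ≠ 6 * 2 ^ s - 3 + 2 := by
      rintro (_ | k) hk <;> omega
    have doubling := (isCohitMap_mulSqClass_X_mul_X_mul_X not_pow i j l).apply_eq_of_Qmk_eq ih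
    rw [mulSqClass_apply, mulSqClass_apply, ha] at doubling
    rw [hn, hb, hc, ha]
    convert doubling using 2 <;> ring

end Squaring

section Spikes

lemma sqCoeff_two_mul_two_mul_add_one (k e : ℕ) : sqCoeff (2 * k) (2 * e + 1) = 0 := by
  rw [sqCoeff, pow_mul', ← ZMod.expand_card, Polynomial.coeff_expand two_pos,
    if_neg (by omega)]

lemma sqCoeff_two_mul_add_one_two_mul_add_one (k e : ℕ) :
    sqCoeff (2 * k + 1) (2 * e + 1) = sqCoeff k e := by
  set F : Polynomial kk := (Polynomial.X + Polynomial.X ^ 2) ^ k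
  have factor : (Polynomial.X + Polynomial.X ^ 2 : Polynomial kk) ^ (2 * k + 1) =
      (Polynomial.expand kk 2 F + Polynomial.expand kk 2 F * Polynomial.X) * Polynomial.X := by
    rw [ZMod.expand_card]
    ring
  have odd_part : (Polynomial.expand kk 2 F * Polynomial.X).coeff (2 * e) = 0 := by
    rcases e with _ | e
    · simp
    · rw [show 2 * (e + 1) = 2 * e + 1 + 1 by ring, Polynomial.coeff_mul_X,
        Polynomial.coeff_expand two_pos, if_neg (by omega)]
  rw [sqCoeff, factor, Polynomial.coeff_mul_X, Polynomial.coeff_add, odd_part, add_zero,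
    Polynomial.coeff_expand_mul' two_pos, sqCoeff]

lemma sqCoeff_two_pow_sub_one (s k : ℕ) :
    sqCoeff k (2 ^ s - 1) = if k = 2 ^ s - 1 then 1 else 0 := by
  induction s generalizing k with
  | zero =>
    rcases Nat.eq_zero_or_pos k with rfl | hk
    · simp [sqCoeff_self]
    · simp [sqCoeff_eq_zero_of_lt hk, hk.ne']
  | succ s ih =>
    have hpos := Nat.one_le_two_pow (n := s)
    rw [show 2 ^ (s + 1) - 1 = 2 * (2 ^ s - 1) + 1 by omega]
    obtain ⟨j, rfl | rfl⟩ := Nat.even_or_odd' k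
    · rw [sqCoeff_two_mul_two_mul_add_one, if_neg (by omega)]
    · simp [sqCoeff_two_mul_add_one_two_mul_add_one, ih]

lemma sqCoeff_three_mul_two_pow_sub_one (s k : ℕ) :
    sqCoeff k (3 * 2 ^ s - 1) =
      (if k = 3 * 2 ^ s - 1 then 1 else 0) + (if k = 2 ^ (s + 1) - 1 then 1 else 0) := by
  induction s generalizing k with
  | zero =>
    rcases Nat.lt_or_ge 2 k with hk | hk
    · rw [sqCoeff_eq_zero_of_lt (by omega), if_neg (by omega), if_neg (by omega), add_zero]
    · interval_cases k <;> simp [sqCoeff_eq_choose]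
  | succ s ih =>
    have hpos := Nat.one_le_two_pow (n := s)
    rw [show 3 * 2 ^ (s + 1) - 1 = 2 * (3 * 2 ^ s - 1) + 1 by omega,
      show 2 ^ (s + 1 + 1) - 1 = 2 * (2 ^ (s + 1) - 1) + 1 by omega]
    obtain ⟨j, rfl | rfl⟩ := Nat.even_or_odd' k
    · rw [sqCoeff_two_mul_two_mul_add_one, if_neg (by omega), if_neg (by omega), add_zero]
    · simp [sqCoeff_two_mul_add_one_two_mul_add_one, ih]

/-- The exponents of a spike, a monomial all of whose exponents have the form `2 ^ k - 1`. -/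
def IsSpike (e : Fin 4 →₀ ℕ) : Prop := ∀ t, ∃ k, e t = 2 ^ k - 1

lemma coeff_sqTotal_of_isSpike {e : Fin 4 →₀ ℕ} (he : IsSpike e) (f : P4) :
    coeff e (sqTotal f) = coeff e f := by
  refine linearMap_apply_eq_of_monomial (L := lcoeff kk e ∘ₗ sqTotal.toLinearMap)
    (L' := lcoeff kk e) (fun m => ?_) f
  change coeff e (sqTotal (monomial m 1)) = coeff e (monomial m 1)
  rw [coeff_sqTotal_monomial, coeff_monomial, ← prod_ite_eq_apply]
  refine Finset.prod_congr rfl fun t _ => ?_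
  obtain ⟨k, hk⟩ := he t
  rw [hk, sqCoeff_two_pow_sub_one]

lemma coeff_sqTotal_of_three_mul_two_pow_sub_one {e : Fin 4 →₀ ℕ} {l : Fin 4} {s : ℕ}
    (hl : e l = 3 * 2 ^ s - 1) (hspike : ∀ t ≠ l, ∃ k, e t = 2 ^ k - 1) (f : P4) :
    coeff e (sqTotal f) = coeff e f + coeff (e.update l (2 ^ (s + 1) - 1)) f := by
  refine linearMap_apply_eq_of_monomial (L := lcoeff kk e ∘ₗ sqTotal.toLinearMap)
    (L' := lcoeff kk e + lcoeff kk (e.update l (2 ^ (s + 1) - 1))) (fun m => ?_) f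
  change coeff e (sqTotal (monomial m 1)) = coeff e (monomial m 1) + coeff _ (monomial m 1)
  rw [coeff_sqTotal_monomial, coeff_monomial, coeff_monomial, ← prod_ite_eq_apply,
    ← prod_ite_eq_apply]
  have off_l : ∀ t ≠ l, (if m t = e t then 1 else 0) = sqCoeff (m t) (e t) := by
    intro t ht
    obtain ⟨k, hk⟩ := hspike t ht
    rw [hk, sqCoeff_two_pow_sub_one]
  refine (Finset.prod_add_prod_eq (Finset.mem_univ l) ?_ (fun t _ ht => off_l t ht)
    fun t _ ht => ?_).symm
  · simp [hl, sqCoeff_three_mul_two_pow_sub_one]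
  · simpa [Finsupp.update_apply, ht] using off_l t ht

lemma isCohitMap_lcoeff_of_isSpike {n : ℕ} {e : Fin 4 →₀ ℕ} (hdeg : e.degree = n)
    (he : IsSpike e) : IsCohitMap n (lcoeff kk e) where
  eq_zero_of_isHomogeneous hd hf := hf.coeff_eq_zero (hdeg.trans_ne hd.symm)
  apply_sqTotal := coeff_sqTotal_of_isSpike he

lemma isCohitMap_lcoeff_add_lcoeff {n s : ℕ} {e e' : Fin 4 →₀ ℕ} {l l' : Fin 4}
    (hdeg : e.degree = n) (hdeg' : e'.degree = n)
    (hl : e l = 3 * 2 ^ s - 1) (hspike : ∀ t ≠ l, ∃ k, e t = 2 ^ k - 1)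
    (hl' : e' l' = 3 * 2 ^ s - 1) (hspike' : ∀ t ≠ l', ∃ k, e' t = 2 ^ k - 1)
    (h : e.update l (2 ^ (s + 1) - 1) = e'.update l' (2 ^ (s + 1) - 1)) :
    IsCohitMap n (lcoeff kk e + lcoeff kk e') where
  eq_zero_of_isHomogeneous hd hf := by
    rw [LinearMap.add_apply, lcoeff_apply, lcoeff_apply,
      hf.coeff_eq_zero (hdeg.trans_ne hd.symm), hf.coeff_eq_zero (hdeg'.trans_ne hd.symm),
      add_zero]
  apply_sqTotal f := by
    simp only [LinearMap.add_apply, lcoeff_apply]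
    rw [coeff_sqTotal_of_three_mul_two_pow_sub_one hl hspike,
      coeff_sqTotal_of_three_mul_two_pow_sub_one hl' hspike', h, add_add_add_comm,
      CharTwo.add_self_eq_zero, add_zero]

theorem linearIndependent_Qmk_monomial_of_isSpike {n : ℕ} {ι : Type*} {e : ι → Fin 4 →₀ ℕ}
    (hinj : Function.Injective e) (hdeg : ∀ i, (e i).degree = n) (he : ∀ i, IsSpike (e i)) :
    LinearIndependent kk fun i => Qmk n (monomial (e i) 1) :=
  linearIndependent_Qmk_of_dual (φ := fun i => lcoeff kk (e i))
    (fun i => isCohitMap_lcoeff_of_isSpike (hdeg i) (he i))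
    (fun i j hij => by
      rw [lcoeff_apply, coeff_monomial, if_neg fun h => hij (hinj h).symm])
    fun i => by rw [lcoeff_apply, coeff_monomial, if_pos rfl]

end Spikes

section Triples

/-- Ordered triples `(i, j, l)` of distinct indices with `j < l`. -/
abbrev OrderedTriple : Type :=
  {t : Fin 4 × Fin 4 × Fin 4 // t.1 ≠ t.2.1 ∧ t.1 ≠ t.2.2 ∧ t.2.1 < t.2.2}

/-- The exponents of the monomial `x_i ^ p * x_j ^ q * x_l ^ r`. -/
def tripleExp (p q r : ℕ) (i j l : Fin 4) : Fin 4 →₀ ℕ :=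
  Finsupp.single i p + Finsupp.single j q + Finsupp.single l r

/-- The monomial `x_i ^ p * x_j ^ q * x_l ^ r` attached to `(i, j, l)`. -/
def tripleMonomial (p q r : ℕ) (t : OrderedTriple) : P4 :=
  X t.1.1 ^ p * X t.1.2.1 ^ q * X t.1.2.2 ^ r

lemma tripleMonomial_eq_monomial (p q r : ℕ) (t : OrderedTriple) :
    tripleMonomial p q r t = monomial (tripleExp p q r t.1.1 t.1.2.1 t.1.2.2) 1 := by
  simp [tripleMonomial, tripleExp, X_pow_eq_monomial, monomial_mul]

lemma degree_tripleExp (p q r : ℕ) (i j l : Fin 4) :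
    (tripleExp p q r i j l).degree = p + q + r := by
  simp [tripleExp]

variable {i j l i' j' l' : Fin 4} {p q r : ℕ}

lemma tripleExp_apply (hij : i ≠ j) (hil : i ≠ l) (hjl : j ≠ l) (p q r : ℕ) (t : Fin 4) :
    tripleExp p q r i j l t = if t = i then p else if t = j then q else if t = l then r else 0 := by
  simp only [tripleExp, Finsupp.add_apply, Finsupp.single_apply]
  grind

lemma eq_and_eq_or_eq_swap_of_tripleExp_eq (hp : p ≠ 0) (hq : q ≠ 0) (hr : r ≠ 0) (hpq : p ≠ q)
    (hpr : p ≠ r) (hij : i ≠ j) (hil : i ≠ l) (hjl : j ≠ l) (hij' : i' ≠ j') (hil' : i' ≠ l')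
    (hjl' : j' ≠ l') (h : tripleExp p q r i j l = tripleExp p q r i' j' l') :
    i = i' ∧ (j = j' ∧ l = l' ∨ q = r ∧ j = l' ∧ l = j') := by
  have h_apply t := DFunLike.congr_fun h t
  simp only [tripleExp_apply hij hil hjl, tripleExp_apply hij' hil' hjl'] at h_apply
  have hi := h_apply i
  have hj := h_apply j
  have hl := h_apply l
  clear h h_apply
  grind

lemma tripleExp_injective (hp : p ≠ 0) (hq : q ≠ 0) (hr : r ≠ 0) (hpq : p ≠ q) (hpr : p ≠ r) :
    Function.Injective fun t : OrderedTriple => tripleExp p q r t.1.1 t.1.2.1 t.1.2.2 := by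
  rintro ⟨⟨i, j, l⟩, hij, hil, hjl⟩ ⟨⟨i', j', l'⟩, hij', hil', hjl'⟩ h
  obtain ⟨rfl, ⟨rfl, rfl⟩ | ⟨-, rfl, rfl⟩⟩ := eq_and_eq_or_eq_swap_of_tripleExp_eq hp hq hr hpq hpr
    hij hil hjl.ne hij' hil' hjl'.ne h
  · rfl
  · exact absurd hjl hjl'.asymm

lemma sum_orderedTriple (F : Fin 4 → Fin 4 → Fin 4 → P4) :
    (∑ i : Fin 4, ∑ j : Fin 4, ∑ l : Fin 4,
      if i ≠ j ∧ i ≠ l ∧ j ≠ l ∧ j < l then F i j l else 0) =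
    ∑ t : OrderedTriple, F t.1.1 t.1.2.1 t.1.2.2 := by
  rw [← Finset.sum_subtype (Finset.univ.filter fun t : Fin 4 × Fin 4 × Fin 4 =>
    t.1 ≠ t.2.1 ∧ t.1 ≠ t.2.2 ∧ t.2.1 ≠ t.2.2 ∧ t.2.1 < t.2.2)
    (fun t => by grind)
    (fun t => F t.1 t.2.1 t.2.2), Finset.sum_filter, Fintype.sum_prod_type]
  simp_rw [Fintype.sum_prod_type]

lemma exists_perm_apply_eq (hij : i ≠ j) (hil : i ≠ l) (hjl : j ≠ l) (hij' : i' ≠ j')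
    (hil' : i' ≠ l') (hjl' : j' ≠ l') :
    ∃ σ : Equiv.Perm (Fin 4), σ i = i' ∧ σ j = j' ∧ σ l = l' := by
  have from_zero_one_two : ∀ a b c : Fin 4, a ≠ b → a ≠ c → b ≠ c →
      ∃ σ : Equiv.Perm (Fin 4), σ 0 = a ∧ σ 1 = b ∧ σ 2 = c := by
    decide
  obtain ⟨σ, rfl, rfl, rfl⟩ := from_zero_one_two i j l hij hil hjl
  obtain ⟨τ, rfl, rfl, rfl⟩ := from_zero_one_two i' j' l' hij' hil' hjl'
  exact ⟨τ * σ⁻¹, by simp⟩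

lemma exists_rename_tripleMonomial_eq (p q r : ℕ) (t t' : OrderedTriple) :
    ∃ σ : Equiv.Perm (Fin 4), rename σ (tripleMonomial p q r t) = tripleMonomial p q r t' := by
  obtain ⟨⟨i, j, l⟩, hij, hil, hjl⟩ := t
  obtain ⟨⟨i', j', l'⟩, hij', hil', hjl'⟩ := t'
  obtain ⟨σ, hi, hj, hl⟩ := exists_perm_apply_eq hij hil hjl.ne hij' hil' hjl'.ne
  exact ⟨σ, by simp [tripleMonomial, hi, hj, hl]⟩

lemma exists_Qmk_tripleMonomial_eq_Qmk_rename {n : ℕ}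
    (hswap : ∀ i j l : Fin 4,
      Qmk n (X i ^ p * X j ^ q * X l ^ r) = Qmk n (X i ^ p * X l ^ q * X j ^ r))
    (σ : Equiv.Perm (Fin 4)) (t : OrderedTriple) :
    ∃ t', Qmk n (tripleMonomial p q r t') = Qmk n (rename σ (tripleMonomial p q r t)) := by
  obtain ⟨⟨i, j, l⟩, hij, hil, hjl⟩ := t
  simp only [tripleMonomial, map_mul, map_pow, rename_X]
  rcases lt_or_gt_of_ne (σ.injective.ne hjl.ne) with h | h
  · exact ⟨⟨⟨σ i, σ j, σ l⟩, σ.injective.ne hij, σ.injective.ne hil, h⟩, rfl⟩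
  · exact ⟨⟨⟨σ i, σ l, σ j⟩, σ.injective.ne hil, σ.injective.ne hij, h⟩, hswap _ _ _⟩

theorem permSpan_tripleMonomial {n : ℕ}
    (hswap : ∀ i j l : Fin 4,
      Qmk n (X i ^ p * X j ^ q * X l ^ r) = Qmk n (X i ^ p * X l ^ q * X j ^ r))
    (t : OrderedTriple) :
    permSpan n {tripleMonomial p q r t} =
      Submodule.span kk (Qmk n '' Set.range (tripleMonomial p q r)) :=
  permSpan_singleton_eq_span_range (exists_Qmk_tripleMonomial_eq_Qmk_rename hswap) t fun t' =>
    (exists_rename_tripleMonomial_eq p q r t t').imp fun _ h => congrArg (Qmk n) h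

theorem permSpan_tripleMonomial_inf_QInv {n : ℕ}
    (hswap : ∀ i j l : Fin 4,
      Qmk n (X i ^ p * X j ^ q * X l ^ r) = Qmk n (X i ^ p * X l ^ q * X j ^ r))
    (hli : LinearIndependent kk fun t => Qmk n (tripleMonomial p q r t)) (t : OrderedTriple) :
    permSpan n {tripleMonomial p q r t} ⊓ QInv n permSet =
      Submodule.span kk {Qmk n (∑ t, tripleMonomial p q r t)} :=
  permSpan_singleton_inf_QInv hli (exists_Qmk_tripleMonomial_eq_Qmk_rename hswap) t fun t' =>
    (exists_rename_tripleMonomial_eq p q r t t').imp fun _ h => congrArg (Qmk n) h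

end Triples

section FirstFamily

lemma isSpike_tripleExp {i j l : Fin 4} (hij : i ≠ j) (hil : i ≠ l) (hjl : j ≠ l) (a b c : ℕ) :
    IsSpike (tripleExp (2 ^ a - 1) (2 ^ b - 1) (2 ^ c - 1) i j l) := by
  intro t
  rw [tripleExp_apply hij hil hjl]
  split_ifs
  exacts [⟨a, rfl⟩, ⟨b, rfl⟩, ⟨c, rfl⟩, ⟨0, rfl⟩]

lemma A1set_eq_range (s : ℕ) :
    A1set s = Set.range (tripleMonomial (2 ^ (s + 2) - 1) (2 ^ s - 1) (2 ^ s - 1)) := by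
  refine Set.Subset.antisymm ?_ ?_
  · rintro _ ⟨i, j, l, hij, hil, hjl, rfl⟩
    rcases lt_or_gt_of_ne hjl with h | h
    · exact ⟨⟨⟨i, j, l⟩, hij, hil, h⟩, rfl⟩
    · exact ⟨⟨⟨i, l, j⟩, hil, hij, h⟩, mul_right_comm _ _ _⟩
  · rintro _ ⟨⟨⟨i, j, l⟩, hij, hil, hjl⟩, rfl⟩
    exact ⟨i, j, l, hij, hil, hjl.ne, rfl⟩

lemma A1sum_eq_sum (s : ℕ) :
    A1sum s = ∑ t, tripleMonomial (2 ^ (s + 2) - 1) (2 ^ s - 1) (2 ^ s - 1) t :=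
  sum_orderedTriple _

lemma A1_generator_eq (s : ℕ) :
    (X 1 ^ (2 ^ s - 1) * X 2 ^ (2 ^ s - 1) * X 3 ^ (2 ^ (s + 2) - 1) : P4) =
      tripleMonomial (2 ^ (s + 2) - 1) (2 ^ s - 1) (2 ^ s - 1) ⟨(3, 1, 2), by decide⟩ := by
  rw [mul_comm, ← mul_assoc]
  rfl

lemma linearIndependent_Qmk_A1 {s : ℕ} (hs : 1 ≤ s) :
    LinearIndependent kk fun t =>
      Qmk (6 * 2 ^ s - 3) (tripleMonomial (2 ^ (s + 2) - 1) (2 ^ s - 1) (2 ^ s - 1) t) := by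
  have hpos : 2 ^ 1 ≤ 2 ^ s := Nat.pow_le_pow_right two_pos hs
  have hfour : 2 ^ (s + 2) = 4 * 2 ^ s := by ring
  simp only [tripleMonomial_eq_monomial]
  refine linearIndependent_Qmk_monomial_of_isSpike
    (tripleExp_injective (by omega) (by omega) (by omega) (by omega) (by omega))
    (fun t => ?_) fun t => isSpike_tripleExp t.2.1 t.2.2.1 t.2.2.2.ne _ _ _
  rw [degree_tripleExp]
  omega

lemma Qmk_A1sum_ne_zero {s : ℕ} (hs : 1 ≤ s) : Qmk (6 * 2 ^ s - 3) (A1sum s) ≠ 0 := by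
  intro h
  rw [A1sum_eq_sum, map_sum] at h
  have hone := Fintype.linearIndependent_iff.1 (linearIndependent_Qmk_A1 hs) 1
    (by simpa only [Pi.one_apply, one_smul] using h) ⟨(3, 1, 2), by decide⟩
  exact one_ne_zero hone

theorem permSpan_A1 (n s : ℕ) :
    permSpan n {X 1 ^ (2 ^ s - 1) * X 2 ^ (2 ^ s - 1) * X 3 ^ (2 ^ (s + 2) - 1)} =
      Submodule.span kk (Qmk n '' A1set s) := by
  rw [A1_generator_eq, A1set_eq_range,
    permSpan_tripleMonomial fun _ _ _ => congrArg _ (mul_right_comm _ _ _)]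

theorem permSpan_A1_inf_QInv {s : ℕ} (hs : 1 ≤ s) :
    permSpan (6 * 2 ^ s - 3) {X 1 ^ (2 ^ s - 1) * X 2 ^ (2 ^ s - 1) * X 3 ^ (2 ^ (s + 2) - 1)} ⊓
        QInv (6 * 2 ^ s - 3) permSet =
      Submodule.span kk {Qmk (6 * 2 ^ s - 3) (A1sum s)} := by
  rw [A1_generator_eq, A1sum_eq_sum, permSpan_tripleMonomial_inf_QInv
    (fun _ _ _ => congrArg _ (mul_right_comm _ _ _)) (linearIndependent_Qmk_A1 hs)]

end FirstFamily

section SecondFamily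

lemma A2set_eq_range (s : ℕ) :
    A2set s = Set.range (tripleMonomial (2 ^ s - 1) (2 ^ (s + 1) - 1) (3 * 2 ^ s - 1)) := by
  refine Set.Subset.antisymm ?_ ?_
  · rintro _ ⟨i, j, l, hij, hil, -, hjl, rfl⟩
    exact ⟨⟨⟨i, j, l⟩, hij, hil, hjl⟩, rfl⟩
  · rintro _ ⟨⟨⟨i, j, l⟩, hij, hil, hjl⟩, rfl⟩
    exact ⟨i, j, l, hij, hil, hjl.ne, hjl, rfl⟩

lemma A2sum_eq_sum (s : ℕ) :
    A2sum s = ∑ t, tripleMonomial (2 ^ s - 1) (2 ^ (s + 1) - 1) (3 * 2 ^ s - 1) t :=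
  sum_orderedTriple _

-- Both monomials occur in the total square of
-- `x_i ^ (2 ^ s - 1) * x_j ^ (2 ^ (s + 1) - 1) * x_l ^ (2 ^ (s + 1) - 1)`, so neither coefficient
-- alone vanishes on the hit polynomials.
lemma isCohitMap_lcoeff_tripleExp_add_swap {i j l : Fin 4} (hij : i ≠ j) (hil : i ≠ l)
    (hjl : j ≠ l) (s : ℕ) :
    IsCohitMap (6 * 2 ^ s - 3)
      (lcoeff kk (tripleExp (2 ^ s - 1) (2 ^ (s + 1) - 1) (3 * 2 ^ s - 1) i j l) +
        lcoeff kk (tripleExp (2 ^ s - 1) (2 ^ (s + 1) - 1) (3 * 2 ^ s - 1) i l j)) := by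
  have hdeg (j l : Fin 4) :
      (tripleExp (2 ^ s - 1) (2 ^ (s + 1) - 1) (3 * 2 ^ s - 1) i j l).degree = 6 * 2 ^ s - 3 := by
    have hpos := Nat.one_le_two_pow (n := s)
    rw [degree_tripleExp]
    omega
  have hlast {j l : Fin 4} (hij : i ≠ j) (hil : i ≠ l) (hjl : j ≠ l) :
      tripleExp (2 ^ s - 1) (2 ^ (s + 1) - 1) (3 * 2 ^ s - 1) i j l l = 3 * 2 ^ s - 1 := by
    simp [tripleExp_apply hij hil hjl, hil.symm, hjl.symm]
  have hspike {j l : Fin 4} (hij : i ≠ j) (hil : i ≠ l) (hjl : j ≠ l) : ∀ t ≠ l, ∃ k,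
      tripleExp (2 ^ s - 1) (2 ^ (s + 1) - 1) (3 * 2 ^ s - 1) i j l t = 2 ^ k - 1 := by
    intro t ht
    rw [tripleExp_apply hij hil hjl, if_neg ht]
    split_ifs
    exacts [⟨s, rfl⟩, ⟨s + 1, rfl⟩, ⟨0, rfl⟩]
  refine isCohitMap_lcoeff_add_lcoeff (hdeg j l) (hdeg l j) (hlast hij hil hjl)
    (hspike hij hil hjl) (hlast hil hij hjl.symm) (hspike hil hij hjl.symm) ?_
  ext t
  simp only [Finsupp.update_apply, tripleExp_apply hij hil hjl, tripleExp_apply hil hij hjl.symm]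
  grind

lemma linearIndependent_Qmk_A2 {s : ℕ} (hs : 1 ≤ s) :
    LinearIndependent kk fun t =>
      Qmk (6 * 2 ^ s - 3) (tripleMonomial (2 ^ s - 1) (2 ^ (s + 1) - 1) (3 * 2 ^ s - 1) t) := by
  have hpos : 2 ^ 1 ≤ 2 ^ s := Nat.pow_le_pow_right two_pos hs
  have hinj := tripleExp_injective (p := 2 ^ s - 1) (q := 2 ^ (s + 1) - 1) (r := 3 * 2 ^ s - 1)
    (by omega) (by omega) (by omega) (by omega) (by omega)
  have ne_swap (t t' : OrderedTriple) :
      tripleExp (2 ^ s - 1) (2 ^ (s + 1) - 1) (3 * 2 ^ s - 1) t'.1.1 t'.1.2.1 t'.1.2.2 ≠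
        tripleExp (2 ^ s - 1) (2 ^ (s + 1) - 1) (3 * 2 ^ s - 1) t.1.1 t.1.2.2 t.1.2.1 := by
    intro h
    obtain ⟨-, ⟨hj, hl⟩ | ⟨hqr, -⟩⟩ := eq_and_eq_or_eq_swap_of_tripleExp_eq
      (by omega) (by omega) (by omega) (by omega) (by omega)
      t'.2.1 t'.2.2.1 t'.2.2.2.ne t.2.2.1 t.2.1 t.2.2.2.ne' h
    · exact t.2.2.2.asymm (hj ▸ hl ▸ t'.2.2.2)
    · omega
  simp only [tripleMonomial_eq_monomial]
  refine linearIndependent_Qmk_of_dual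
    (fun t => isCohitMap_lcoeff_tripleExp_add_swap t.2.1 t.2.2.1 t.2.2.2.ne s)
    (fun t t' htt' => ?_) fun t => ?_
  · rw [LinearMap.add_apply, lcoeff_apply, lcoeff_apply, coeff_monomial, coeff_monomial,
      if_neg fun h => htt' (hinj h).symm, if_neg (ne_swap t t'), add_zero]
  · rw [LinearMap.add_apply, lcoeff_apply, lcoeff_apply, coeff_monomial, coeff_monomial,
      if_pos rfl, if_neg (ne_swap t t), add_zero]

theorem permSpan_A2 (s : ℕ) :
    permSpan (6 * 2 ^ s - 3)
        {X 1 ^ (2 ^ s - 1) * X 2 ^ (2 ^ (s + 1) - 1) * X 3 ^ (3 * 2 ^ s - 1)} =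
      Submodule.span kk (Qmk (6 * 2 ^ s - 3) '' A2set s) := by
  rw [A2set_eq_range]
  exact permSpan_tripleMonomial (fun i j l => Qmk_A2_swap i j l s) ⟨(1, 2, 3), by decide⟩

theorem permSpan_A2_inf_QInv {s : ℕ} (hs : 1 ≤ s) :
    permSpan (6 * 2 ^ s - 3)
          {X 1 ^ (2 ^ s - 1) * X 2 ^ (2 ^ (s + 1) - 1) * X 3 ^ (3 * 2 ^ s - 1)} ⊓
        QInv (6 * 2 ^ s - 3) permSet =
      Submodule.span kk {Qmk (6 * 2 ^ s - 3) (A2sum s)} := by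
  rw [A2sum_eq_sum]
  exact permSpan_tripleMonomial_inf_QInv (fun i j l => Qmk_A2_swap i j l s)
    (linearIndependent_Qmk_A2 hs) ⟨(1, 2, 3), by decide⟩

end SecondFamily

section ThirdFamily

/-- The exponents of `omitMonomial b k`. -/
def omitExp (b : ℕ) (k : Fin 4) : Fin 4 →₀ ℕ :=
  Finsupp.equivFunOnFinite.symm fun t => if t = k then 0 else b

/-- The product of the `b`-th powers of the three variables other than `x_k`. -/
def omitMonomial (b : ℕ) (k : Fin 4) : P4 := monomial (omitExp b k) 1

lemma omitMonomial_eq_prod (b : ℕ) (k : Fin 4) :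
    omitMonomial b k = ∏ t, X t ^ (if t = k then 0 else b) := by
  rw [omitMonomial, monomial_eq, Finsupp.prod_fintype _ _ (by simp)]
  simp [omitExp]

lemma rename_omitMonomial (b : ℕ) (σ : Equiv.Perm (Fin 4)) (k : Fin 4) :
    rename σ (omitMonomial b k) = omitMonomial b (σ k) := by
  simp only [omitMonomial_eq_prod, map_prod, map_pow, rename_X]
  rw [← Equiv.prod_comp σ fun t => (X t ^ (if t = σ k then 0 else b) : P4)]
  simp

lemma omitExp_injective {b : ℕ} (hb : b ≠ 0) : Function.Injective (omitExp b) := by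
  intro k k' h
  have hk := DFunLike.congr_fun h k
  simp only [omitExp, Finsupp.equivFunOnFinite_symm_apply_apply, if_true] at hk
  grind

lemma degree_omitExp (b : ℕ) (k : Fin 4) : (omitExp b k).degree = 3 * b := by
  simp [omitExp, Finsupp.degree_eq_sum, Finset.sum_ite, Finset.filter_ne']

lemma linearIndependent_Qmk_omitMonomial (s : ℕ) :
    LinearIndependent kk fun k => Qmk (6 * 2 ^ s - 3) (omitMonomial (2 ^ (s + 1) - 1) k) := by
  have hpos := Nat.one_le_two_pow (n := s)
  refine linearIndependent_Qmk_monomial_of_isSpike (omitExp_injective (by omega))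
    (fun k => ?_) fun k t => ?_
  · rw [degree_omitExp]
    omega
  · simp only [omitExp, Finsupp.equivFunOnFinite_symm_apply_apply]
    split_ifs
    exacts [⟨0, rfl⟩, ⟨s + 1, rfl⟩]

lemma omitMonomial_values (b : ℕ) :
    omitMonomial b 0 = X 1 ^ b * X 2 ^ b * X 3 ^ b ∧
    omitMonomial b 1 = X 0 ^ b * X 2 ^ b * X 3 ^ b ∧
    omitMonomial b 2 = X 0 ^ b * X 1 ^ b * X 3 ^ b ∧
    omitMonomial b 3 = X 0 ^ b * X 1 ^ b * X 2 ^ b := by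
  simp [omitMonomial_eq_prod, Fin.prod_univ_four]

lemma A3set_eq_range (s : ℕ) : A3set s = Set.range (omitMonomial (2 ^ (s + 1) - 1)) := by
  obtain ⟨h0, h1, h2, h3⟩ := omitMonomial_values (2 ^ (s + 1) - 1)
  refine Set.Subset.antisymm ?_ ?_
  · rintro _ ⟨i, j, l, hij, hjl, rfl⟩
    have cases : (i = 1 ∧ j = 2 ∧ l = 3) ∨ (i = 0 ∧ j = 2 ∧ l = 3) ∨ (i = 0 ∧ j = 1 ∧ l = 3) ∨
        (i = 0 ∧ j = 1 ∧ l = 2) := by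
      omega
    rcases cases with ⟨rfl, rfl, rfl⟩ | ⟨rfl, rfl, rfl⟩ | ⟨rfl, rfl, rfl⟩ | ⟨rfl, rfl, rfl⟩
    exacts [⟨0, h0⟩, ⟨1, h1⟩, ⟨2, h2⟩, ⟨3, h3⟩]
  · rintro _ ⟨k, rfl⟩
    fin_cases k
    exacts [⟨1, 2, 3, by decide, by decide, h0⟩, ⟨0, 2, 3, by decide, by decide, h1⟩,
      ⟨0, 1, 3, by decide, by decide, h2⟩, ⟨0, 1, 2, by decide, by decide, h3⟩]

lemma A3sum_eq_sum (s : ℕ) : A3sum s = ∑ k, omitMonomial (2 ^ (s + 1) - 1) k := by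
  obtain ⟨h0, h1, h2, h3⟩ := omitMonomial_values (2 ^ (s + 1) - 1)
  rw [← Equiv.sum_comp Fin.revPerm]
  simp [A3sum, Fin.sum_univ_four, h0, h1, h2, h3]

theorem permSpan_A3 (n s : ℕ) :
    permSpan n
        {X 1 ^ (2 ^ (s + 1) - 1) * X 2 ^ (2 ^ (s + 1) - 1) * X 3 ^ (2 ^ (s + 1) - 1)} =
      Submodule.span kk (Qmk n '' A3set s) := by
  rw [A3set_eq_range, ← (omitMonomial_values _).1]
  exact permSpan_singleton_eq_span_range
    (fun σ k => ⟨σ k, by rw [rename_omitMonomial]⟩) 0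
    fun k => ⟨Equiv.swap 0 k, by rw [rename_omitMonomial, Equiv.swap_apply_left]⟩

theorem permSpan_A3_inf_QInv (s : ℕ) :
    permSpan (6 * 2 ^ s - 3)
          {X 1 ^ (2 ^ (s + 1) - 1) * X 2 ^ (2 ^ (s + 1) - 1) * X 3 ^ (2 ^ (s + 1) - 1)} ⊓
        QInv (6 * 2 ^ s - 3) permSet =
      Submodule.span kk {Qmk (6 * 2 ^ s - 3) (A3sum s)} := by
  rw [A3sum_eq_sum, ← (omitMonomial_values _).1]
  exact permSpan_singleton_inf_QInv (linearIndependent_Qmk_omitMonomial s)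
    (fun σ k => ⟨σ k, by rw [rename_omitMonomial]⟩) 0
    fun k => ⟨Equiv.swap 0 k, by rw [rename_omitMonomial, Equiv.swap_apply_left]⟩

end ThirdFamily

/-- In degree `n = 6·2^s - 3` (`s ≥ 1`):
(i) the `Σ_4`-submodule of `Q_n` generated by `[x₂^{2^s-1}x₃^{2^s-1}x₄^{2^{s+2}-1}]` is the
span of the classes of `A1`, and its `Σ_4`-invariants are one-dimensional, spanned by the
class of the sum of `A1`;
(ii) the `Σ_4`-submodule generated by `[x₂^{2^s-1}x₃^{2^{s+1}-1}x₄^{3·2^s-1}]` is the span of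
the classes of `A2`, and its `Σ_4`-invariants are spanned by the class of the sum of `A2`;
(iii) the `Σ_4`-submodule generated by `[x₂^{2^{s+1}-1}x₃^{2^{s+1}-1}x₄^{2^{s+1}-1}]` is the
span of the classes of `A3`, and its `Σ_4`-invariants are spanned by the class of the sum
of `A3`. -/
theorem statement_9 (s n : ℕ) (hs : 1 ≤ s) (hn : n = 6 * 2 ^ s - 3) :
    (permSpan n {X 1 ^ (2 ^ s - 1) * X 2 ^ (2 ^ s - 1) * X 3 ^ (2 ^ (s + 2) - 1)} =
        Submodule.span kk (Qmk n '' A1set s) ∧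
      permSpan n {X 1 ^ (2 ^ s - 1) * X 2 ^ (2 ^ s - 1) * X 3 ^ (2 ^ (s + 2) - 1)} ⊓
          QInv n permSet =
        Submodule.span kk {Qmk n (A1sum s)} ∧
      Qmk n (A1sum s) ≠ 0) ∧
    (permSpan n {X 1 ^ (2 ^ s - 1) * X 2 ^ (2 ^ (s + 1) - 1) * X 3 ^ (3 * 2 ^ s - 1)} =
        Submodule.span kk (Qmk n '' A2set s) ∧
      permSpan n {X 1 ^ (2 ^ s - 1) * X 2 ^ (2 ^ (s + 1) - 1) * X 3 ^ (3 * 2 ^ s - 1)} ⊓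
          QInv n permSet =
        Submodule.span kk {Qmk n (A2sum s)}) ∧
    (permSpan n
          {X 1 ^ (2 ^ (s + 1) - 1) * X 2 ^ (2 ^ (s + 1) - 1) * X 3 ^ (2 ^ (s + 1) - 1)} =
        Submodule.span kk (Qmk n '' A3set s) ∧
      permSpan n
            {X 1 ^ (2 ^ (s + 1) - 1) * X 2 ^ (2 ^ (s + 1) - 1) * X 3 ^ (2 ^ (s + 1) - 1)} ⊓
          QInv n permSet =
        Submodule.span kk {Qmk n (A3sum s)}) := by
  subst hn
  exact ⟨⟨permSpan_A1 _ s, permSpan_A1_inf_QInv hs, Qmk_A1sum_ne_zero hs⟩,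
    ⟨permSpan_A2 s, permSpan_A2_inf_QInv hs⟩, permSpan_A3 _ s, permSpan_A3_inf_QInv s⟩

end
end

section
/- Let q ≥ 1 and n ≥ 1 be integers with μ(n) < q. Then there exist integers s ≥ 0, r, and v ≥ 0 such that 0 ≤ μ(v) < r < q and n = r(2^s − 1) + v·2^s. -/
/-- `α n`: the number of ones in the binary expansion of `n`. -/
def binAlpha (n : ℕ) : ℕ := (Nat.digits 2 n).sum

/-- `μ n = min { k : α (n + k) ≤ k }`. -/
noncomputable def binMu (n : ℕ) : ℕ := sInf {k : ℕ | binAlpha (n + k) ≤ k}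

/-!
For positive `r`, the equation `n = r(2^s - 1) + v·2^s` says `n + r = (v + r)·2^s`, so powers of two
have to be split off from `n + r`. Start from `α(n + r) ≤ r`, which holds for `r = μ(n)`. If
`μ(n) < r`, stop with `v = n`. Otherwise `α(n + r - 1) ≥ r`, which forces `n + r` to be even and at
least `2r`: for odd `n + r` one has `α(n + r - 1) = α(n + r) - 1`, and for `n + r = 2(u + 1)` one
has `α(n + r - 1) = α(u) + 1 ≤ u + 1`. Hence `n + r = 2(m + r)` with `m < n` and
`α(m + r) = α(n + r) ≤ r`, and one continues with `m`.
-/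

theorem binAlpha_le_self (n : ℕ) : binAlpha n ≤ n := Nat.digit_sum_le 2 n

theorem binAlpha_two_mul (n : ℕ) : binAlpha (2 * n) = binAlpha n := by
  rcases n.eq_zero_or_pos with rfl | hn
  · rfl
  · simp only [binAlpha, Nat.digits_base_mul one_lt_two hn, List.sum_cons, zero_add]

theorem binAlpha_two_mul_add_one (n : ℕ) : binAlpha (2 * n + 1) = binAlpha n + 1 := by
  rw [binAlpha, add_comm (2 * n), Nat.digits_add 2 one_lt_two 1 n one_lt_two (.inl one_ne_zero),
    List.sum_cons, add_comm, binAlpha]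

theorem binAlpha_pos {n : ℕ} (hn : n ≠ 0) : 0 < binAlpha n := by
  induction n using Nat.strong_induction_on with
  | _ n ih =>
    obtain ⟨u, rfl | rfl⟩ := n.even_or_odd'
    · rw [binAlpha_two_mul]
      exact ih u (by lia) (by lia)
    · rw [binAlpha_two_mul_add_one]
      exact Nat.succ_pos _

theorem binMu_le {n k : ℕ} (h : binAlpha (n + k) ≤ k) : binMu n ≤ k := Nat.sInf_le h

theorem binAlpha_add_binMu_le (n : ℕ) : binAlpha (n + binMu n) ≤ binMu n := by
  have add_self_le : binAlpha (n + n) ≤ n := by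
    rw [← two_mul, binAlpha_two_mul]
    exact binAlpha_le_self n
  exact Nat.sInf_mem (s := {k : ℕ | binAlpha (n + k) ≤ k}) ⟨n, add_self_le⟩

theorem binMu_pos {n : ℕ} (hn : n ≠ 0) : 0 < binMu n := by
  have hpos : 0 < binAlpha (n + binMu n) := binAlpha_pos (by lia)
  exact hpos.trans_le (binAlpha_add_binMu_le n)

theorem binMu_lt_or_exists_add_eq_two_mul {n r : ℕ} (hr : 0 < r) (h : binAlpha (n + r) ≤ r) :
    binMu n < r ∨ ∃ m, n + r = 2 * (m + r) := by
  obtain ⟨k, rfl⟩ := Nat.exists_eq_add_one.mpr hr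
  rw [← add_assoc] at h
  have binMu_lt_of_le (hk : binAlpha (n + k) ≤ k) : binMu n < k + 1 :=
    Nat.lt_succ_of_le (binMu_le hk)
  obtain ⟨u, hu | hu⟩ := (n + k).even_or_odd'
  · rw [hu, binAlpha_two_mul_add_one] at h
    refine .inl (binMu_lt_of_le ?_)
    rw [hu, binAlpha_two_mul]
    exact Nat.le_of_succ_le_succ h
  · rcases lt_or_ge u k with huk | hku
    · refine .inl (binMu_lt_of_le ?_)
      calc
        binAlpha (n + k) = binAlpha u + 1 := by rw [hu, binAlpha_two_mul_add_one]
        _ ≤ u + 1 := Nat.succ_le_succ (binAlpha_le_self u)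
        _ ≤ k := huk
    · exact .inr ⟨u - k, by lia⟩

theorem exists_add_eq_add_mul_two_pow {n r : ℕ} (hr : 0 < r) (h : binAlpha (n + r) ≤ r) :
    ∃ s v, binMu v < r ∧ n + r = (v + r) * 2 ^ s := by
  induction n using Nat.strong_induction_on with
  | _ n ih =>
    rcases binMu_lt_or_exists_add_eq_two_mul hr h with hlt | ⟨m, hm⟩
    · exact ⟨0, n, hlt, by rw [pow_zero, mul_one]⟩
    · rw [hm, binAlpha_two_mul] at h
      obtain ⟨s, v, hv, hs⟩ := ih m (by lia) h
      exact ⟨s + 1, v, hv, by rw [hm, hs]; ring⟩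

theorem eq_mul_two_pow_sub_one_add_iff {n r s v : ℕ} :
    n = r * (2 ^ s - 1) + v * 2 ^ s ↔ n + r = (v + r) * 2 ^ s := by
  obtain ⟨p, hp⟩ := Nat.exists_eq_add_of_le' (Nat.one_le_two_pow (n := s))
  rw [hp, Nat.add_sub_cancel, ← Nat.add_right_cancel_iff (n := r)]
  ring_nf

/-- If `q ≥ 1`, `n ≥ 1` and `μ(n) < q`, then `n` can be written in the generic form
`n = r(2^s - 1) + v·2^s` with `0 ≤ μ(v) < r < q` and `s ≥ 0`. -/
theorem statement_19 (q n : ℕ) (hq : 1 ≤ q) (hn : 1 ≤ n) (h : binMu n < q) :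
    ∃ s r v : ℕ, binMu v < r ∧ r < q ∧ n = r * (2 ^ s - 1) + v * 2 ^ s := by
  obtain ⟨s, v, hv, hs⟩ :=
    exists_add_eq_add_mul_two_pow (binMu_pos (Nat.ne_of_gt hn)) (binAlpha_add_binMu_le n)
  exact ⟨s, binMu n, v, hv, h, eq_mul_two_pow_sub_one_add_iff.mpr hs⟩
end
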